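/- Let v be a vertex of tenacity t < l_m, where l_m is the length of a minimum length augmenting path in G. Then the set { F(p, v) : p is an evenlevel(v) or oddlevel(v) path } is a singleton; i.e., all minimum even and odd alternating paths to v share a unique 'base'. -/

import Mathlib

attribute [local instance] Classical.propDecidable

variable {V : Type*} [DecidableEq V]

namespace MV

/-- A walk is alternating (w.r.t. matching `M`) in the sense used for alternating paths
starting at an unmatched vertex: the `i`-th edge is matched iff `i` is odd. -/
def IsAlt (G : SimpleGraph V) (M : G.Subgraph) {a b : V} (w : G.Walk a b) : Prop :=
  ∀ i (h : i < w.edges.length), (w.edges.get ⟨i, h⟩ ∈ M.edgeSet ↔ Odd i)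

/-- length of a minimum even alternating path from an unmatched vertex to `v`. -/
noncomputable def evenlevel (G : SimpleGraph V) (M : G.Subgraph) (v : V) : ℕ∞ :=
  sInf {n : ℕ∞ | ∃ (f : V) (w : G.Walk f v),
    f ∉ M.verts ∧ w.IsPath ∧ IsAlt G M w ∧ Even w.length ∧ n = (w.length : ℕ∞)}

/-- length of a minimum odd alternating path from an unmatched vertex to `v`. -/
noncomputable def oddlevel (G : SimpleGraph V) (M : G.Subgraph) (v : V) : ℕ∞ :=
  sInf {n : ℕ∞ | ∃ (f : V) (w : G.Walk f v),
    f ∉ M.verts ∧ w.IsPath ∧ IsAlt G M w ∧ Odd w.length ∧ n = (w.length : ℕ∞)}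

noncomputable def tenacity (G : SimpleGraph V) (M : G.Subgraph) (v : V) : ℕ∞ :=
  evenlevel G M v + oddlevel G M v

noncomputable def minlevel (G : SimpleGraph V) (M : G.Subgraph) (v : V) : ℕ∞ :=
  min (evenlevel G M v) (oddlevel G M v)

noncomputable def maxlevel (G : SimpleGraph V) (M : G.Subgraph) (v : V) : ℕ∞ :=
  max (evenlevel G M v) (oddlevel G M v)

/-- the length of a minimum length augmenting path w.r.t. `M` (`⊤` if none exists). -/
noncomputable def lm (G : SimpleGraph V) (M : G.Subgraph) : ℕ∞ :=
  sInf {n : ℕ∞ | ∃ (f g : V) (w : G.Walk f g), f ∉ M.verts ∧ g ∉ M.verts ∧ f ≠ g ∧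
    w.IsPath ∧ IsAlt G M w ∧ Odd w.length ∧ n = (w.length : ℕ∞)}

/-- `w` is a minimum even- or odd-length alternating path from an unmatched vertex to `v`
  (an `evenlevel(v)` or `oddlevel(v)` path). -/
def IsMinPathTo (G : SimpleGraph V) (M : G.Subgraph) (v f : V) (w : G.Walk f v) : Prop :=
  f ∉ M.verts ∧ w.IsPath ∧ IsAlt G M w ∧
    ((Even w.length ∧ (w.length : ℕ∞) = evenlevel G M v) ∨
     (Odd w.length ∧ (w.length : ℕ∞) = oddlevel G M v))

/-- `b` is the vertex of tenacity greater than `tenacity v` on `w` furthest from the start. -/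
def IsFurthestHigh (G : SimpleGraph V) (M : G.Subgraph) (v : V) {f v' : V}
    (w : G.Walk f v') (b : V) : Prop :=
  ∃ hb : b ∈ w.support, tenacity G M v < tenacity G M b ∧
    ∀ u, ∀ hu : u ∈ w.support, tenacity G M v < tenacity G M u →
      (w.takeUntil u hu).length ≤ (w.takeUntil b hb).length

/-- `b` is the base of `v`: the furthest higher-tenacity vertex on every minimum
even or odd alternating path to `v`. -/
def IsBase (G : SimpleGraph V) (M : G.Subgraph) (v b : V) : Prop :=
  ∀ (f : V) (w : G.Walk f v), IsMinPathTo G M v f w → IsFurthestHigh G M v w b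

/-- minimum even length alternating path from `b` to `v` starting with an unmatched edge
  (`evenlevel(b; v)`). -/
noncomputable def evenlevelFrom (G : SimpleGraph V) (M : G.Subgraph) (b v : V) : ℕ∞ :=
  sInf {n : ℕ∞ | ∃ w : G.Walk b v,
    w.IsPath ∧ IsAlt G M w ∧ Even w.length ∧ n = (w.length : ℕ∞)}

/-- minimum odd length alternating path from `b` to `v` starting with an unmatched edge
  (`oddlevel(b; v)`). -/
noncomputable def oddlevelFrom (G : SimpleGraph V) (M : G.Subgraph) (b v : V) : ℕ∞ :=
  sInf {n : ℕ∞ | ∃ w : G.Walk b v,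
    w.IsPath ∧ IsAlt G M w ∧ Odd w.length ∧ n = (w.length : ℕ∞)}

def Outer (G : SimpleGraph V) (M : G.Subgraph) (v : V) : Prop :=
  evenlevel G M v < oddlevel G M v

/-- The blossom `B_{b,t}`, defined recursively, relative to a base function `bse`. -/
noncomputable def blossom (G : SimpleGraph V) (M : G.Subgraph) (bse : V → V) :
    ℕ → V → Set V
  | 0, _ => ∅
  | 1, _ => ∅
  | (t + 2), b =>
      {v | tenacity G M v = ((t + 2 : ℕ) : ℕ∞) ∧ bse v = b} ∪
      ⋃ v ∈ {u | (u = b ∨ (tenacity G M u = ((t + 2 : ℕ) : ℕ∞) ∧ bse u = b)) ∧ Outer G M u},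
        blossom G M bse t v

/-- The nesting depth `N(B_{b,t})`. -/
noncomputable def nestDepth (G : SimpleGraph V) (M : G.Subgraph) (bse : V → V) :
    ℕ → V → ℕ
  | 0, _ => 0
  | 1, _ => 0
  | (t + 2), b =>
      if {v | tenacity G M v = ((t + 2 : ℕ) : ℕ∞) ∧ bse v = b}.Nonempty then
        1 + sSup ((fun v => nestDepth G M bse t v) ''
          {u | (u = b ∨ (tenacity G M u = ((t + 2 : ℕ) : ℕ∞) ∧ bse u = b)) ∧ Outer G M u})
      else nestDepth G M bse t b

/-- `bse` assigns to each vertex of tenacity `< l_m` its (unique) base. -/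
def BaseFn (G : SimpleGraph V) (M : G.Subgraph) (bse : V → V) : Prop :=
  ∀ v, tenacity G M v < lm G M → IsBase G M v (bse v)

/-- `u` is a predecessor of `v`: `(u,v)` is the last edge of some `minlevel(v)` path. -/
def IsPred (G : SimpleGraph V) (M : G.Subgraph) (u v : V) : Prop :=
  ∃ (f : V) (w : G.Walk f v), f ∉ M.verts ∧ w.IsPath ∧ IsAlt G M w ∧
    (w.length : ℕ∞) = minlevel G M v ∧
    0 < w.length ∧ w.getVert (w.length - 1) = u

/-- A bridge is an edge of `G` that is not a prop. -/
def IsBridge (G : SimpleGraph V) (M : G.Subgraph) (u v : V) : Prop :=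
  G.Adj u v ∧ ¬ IsPred G M u v ∧ ¬ IsPred G M v u

/-- tenacity of an edge. -/
noncomputable def edgeTenacity (G : SimpleGraph V) (M : G.Subgraph) (u v : V) : ℕ∞ :=
  if s(u, v) ∈ M.edgeSet then oddlevel G M u + oddlevel G M v + 1
  else evenlevel G M u + evenlevel G M v + 1

set_option linter.unusedSectionVars false
set_option linter.unusedSimpArgs false

/-- alternating edge condition at index `i` -/
def AE (G : SimpleGraph V) (M : G.Subgraph) (i : ℕ) (x y : V) : Prop :=
  G.Adj x y ∧ (M.Adj x y ↔ i % 2 = 1)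

/-- alternating path of length `n` as a function -/
structure AP (G : SimpleGraph V) (M : G.Subgraph) (n : ℕ) (p : ℕ → V) : Prop where
  h0 : p 0 ∉ M.verts
  inj : ∀ i j, i ≤ n → j ≤ n → p i = p j → i = j
  edge : ∀ i, i < n → AE G M i (p i) (p (i + 1))

/-- level path: minimum among alternating paths of the same parity. -/
structure Lev (G : SimpleGraph V) (M : G.Subgraph) (n : ℕ) (p : ℕ → V) (v : V) : Prop where
  ap : AP G M n p
  fin : p n = v
  min : ∀ k q, AP G M k q → q k = v → k % 2 = n % 2 → n ≤ k

theorem AE.symm {G : SimpleGraph V} {M : G.Subgraph} {i : ℕ} {x y : V} (h : AE G M i x y) :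
    AE G M i y x :=
  ⟨h.1.symm, by rw [M.adj_comm]; exact h.2⟩

theorem AE.congr {G : SimpleGraph V} {M : G.Subgraph} {i j : ℕ} {x y : V} (h : AE G M i x y)
    (hij : i % 2 = j % 2) : AE G M j x y :=
  ⟨h.1, by rw [← hij]; exact h.2⟩

theorem AP.trunc {G : SimpleGraph V} {M : G.Subgraph} {n a : ℕ} {p : ℕ → V} (h : AP G M n p)
    (ha : a ≤ n) : AP G M a p :=
  ⟨h.h0, fun i j hi hj e => h.inj i j (by omega) (by omega) e, fun i hi => h.edge i (by omega)⟩

theorem AP.cat {G : SimpleGraph V} {M : G.Subgraph} {n a l : ℕ} {r q : ℕ → V} (h : AP G M n r)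
    (ha : a ≤ n) (h0 : q 0 = r a) (hinj : ∀ i j, i ≤ l → j ≤ l → q i = q j → i = j)
    (he : ∀ j, j < l → AE G M (a + j) (q j) (q (j + 1)))
    (hd : ∀ i j, i < a → j ≤ l → r i ≠ q j) :
    ∃ w, AP G M (a + l) w ∧ (∀ j, j ≤ a → w j = r j) ∧ (∀ j, j ≤ l → w (a + j) = q j) := by
  have hw2 : ∀ j, j ≤ l → (fun i => if i ≤ a then r i else q (i - a)) (a + j) = q j := by
    intro j hj
    by_cases h1 : j = 0
    · subst h1; simp [h0]
    · have : ¬ (a + j ≤ a) := by omega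
      simp [this, h1]
  have hw1 : ∀ j, j ≤ a → (fun i => if i ≤ a then r i else q (i - a)) j = r j := by
    intro j hj; simp [hj]
  generalize (fun i => if i ≤ a then r i else q (i - a)) = w at hw1 hw2
  refine ⟨w, ⟨?_, ?_, ?_⟩, hw1, hw2⟩
  · rw [hw1 0 (by omega)]; exact h.h0
  · have key : ∀ i j, i < a → a ≤ j → j ≤ a + l → w i ≠ w j := by
      intro i j hi hj hj2
      have := hw2 (j - a) (by omega)
      rw [show a + (j - a) = j by omega] at this
      rw [hw1 i (by omega), this]
      exact hd i _ hi (by omega)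
    intro i j hi hj e
    rcases Nat.lt_or_ge i a with h1 | h1 <;> rcases Nat.lt_or_ge j a with h2 | h2
    · rw [hw1 i (by omega), hw1 j (by omega)] at e
      exact h.inj i j (by omega) (by omega) e
    · exact absurd e (key i j h1 h2 hj)
    · exact absurd e.symm (key j i h2 h1 hi)
    · have e1 := hw2 (i - a) (by omega)
      have e2 := hw2 (j - a) (by omega)
      rw [show a + (i - a) = i by omega] at e1
      rw [show a + (j - a) = j by omega] at e2
      rw [e1, e2] at e
      have := hinj _ _ (by omega) (by omega) e
      omega
  · intro i hi
    rcases Nat.lt_or_ge i a with h1 | h1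
    · rw [hw1 i (by omega), hw1 (i + 1) (by omega)]
      exact h.edge i (by omega)
    · have e1 := hw2 (i - a) (by omega)
      have e2 := hw2 (i - a + 1) (by omega)
      rw [show a + (i - a) = i by omega] at e1
      rw [show a + (i - a + 1) = i + 1 by omega] at e2
      rw [e1, e2]
      have := he (i - a) (by omega)
      rwa [show a + (i - a) = i by omega] at this

theorem AP.fwd {G : SimpleGraph V} {M : G.Subgraph} {n m a c : ℕ} {r p : ℕ → V} (h : AP G M n r)
    (hp : AP G M m p) (ha : a ≤ n) (hc : c ≤ m) (hac : r a = p c) (hpar : a % 2 = c % 2)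
    (hd : ∀ i j, i < a → c ≤ j → j ≤ m → r i ≠ p j) :
    ∃ w, AP G M (a + (m - c)) w ∧ w (a + (m - c)) = p m := by
  obtain ⟨w, h1, -, h3⟩ := h.cat (q := fun j => p (c + j)) (l := m - c) ha (by simp [hac])
    (fun i j hi hj e => by have := hp.inj _ _ (by omega) (by omega) e; omega)
    (fun j hj => (hp.edge (c + j) (by omega)).congr (by omega))
    (fun i j hi hj => hd i _ hi (by omega) (by omega))
  refine ⟨w, h1, ?_⟩
  rw [h3 _ le_rfl]
  show p (c + (m - c)) = p m
  congr 1; omega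

theorem AP.back {G : SimpleGraph V} {M : G.Subgraph} {n m a c d : ℕ} {r p : ℕ → V}
    (h : AP G M n r)
    (hp : AP G M m p) (ha : a ≤ n) (hc : c ≤ m) (hdc : d ≤ c) (hac : r a = p c)
    (hpar : (a + c) % 2 = 1)
    (hd : ∀ i j, i < a → d ≤ j → j ≤ c → r i ≠ p j) :
    ∃ w, AP G M (a + (c - d)) w ∧ w (a + (c - d)) = p d ∧ (∀ j, j ≤ a → w j = r j) ∧
      (∀ j, j ≤ c - d → w (a + j) = p (c - j)) := by
  obtain ⟨w, h1, h2, h3⟩ := h.cat (q := fun j => p (c - j)) (l := c - d) ha (by simp [hac])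
    (fun i j hi hj e => by have := hp.inj _ _ (by omega) (by omega) e; omega)
    (fun j hj => by
      have := (hp.edge (c - (j + 1)) (by omega)).symm
      rw [show c - (j + 1) + 1 = c - j by omega] at this
      exact this.congr (by omega))
    (fun i j hi hj => hd i _ hi (by omega) (by omega))
  refine ⟨w, h1, ?_, h2, h3⟩
  rw [h3 _ le_rfl]
  show p (c - (c - d)) = p d
  congr 1; omega

theorem first_hit {r p : ℕ → V} {n lo m c0 : ℕ} (h1 : lo ≤ c0) (h2 : c0 ≤ m) (h : r n = p c0) :
    ∃ a c, a ≤ n ∧ lo ≤ c ∧ c ≤ m ∧ r a = p c ∧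
      ∀ i j, i < a → lo ≤ j → j ≤ m → r i ≠ p j := by
  classical
  have hex : ∃ a, ∃ c, lo ≤ c ∧ c ≤ m ∧ r a = p c := ⟨n, c0, h1, h2, h⟩
  obtain ⟨c, hc1, hc2, hc3⟩ := Nat.find_spec hex
  refine ⟨Nat.find hex, c, Nat.find_min' hex ⟨c0, h1, h2, h⟩, hc1, hc2, hc3, ?_⟩
  intro i j hi hj1 hj2 e
  exact Nat.find_min hex hi ⟨j, hj1, hj2, e⟩

theorem AP.exists_lev {G : SimpleGraph V} {M : G.Subgraph} {n : ℕ} {p : ℕ → V}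
    (h : AP G M n p) : ∃ k q, Lev G M k q (p n) ∧ k ≤ n ∧ k % 2 = n % 2 := by
  classical
  have hex : ∃ k, k % 2 = n % 2 ∧ ∃ q, AP G M k q ∧ q k = p n := ⟨n, rfl, p, h, rfl⟩
  obtain ⟨h1, q, h2, h3⟩ := Nat.find_spec hex
  refine ⟨Nat.find hex, q, ⟨h2, h3, ?_⟩, Nat.find_min' hex ⟨rfl, p, h, rfl⟩, h1⟩
  intro k q' hk hk2 hk3
  exact Nat.find_min' hex ⟨by omega, q', hk, hk2⟩

theorem Lev.len_eq {G : SimpleGraph V} {M : G.Subgraph} {n m : ℕ} {p q : ℕ → V} {v : V}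
    (h : Lev G M n p v) (h' : Lev G M m q v) (hp : n % 2 = m % 2) : n = m :=
  le_antisymm (h.min _ _ h'.ap h'.fin hp.symm) (h'.min _ _ h.ap h.fin hp)

/-! Bridge to walks -/

theorem walk_to_AP {G : SimpleGraph V} {M : G.Subgraph} {f v : V} (w : G.Walk f v)
    (hf : f ∉ M.verts) (hp : w.IsPath) (ha : IsAlt G M w) : AP G M w.length w.getVert := by
  refine ⟨by simpa using hf, ?_, ?_⟩
  · intro i j hi hj e
    exact hp.getVert_injOn (by simpa using hi) (by simpa using hj) e
  · intro i hi
    refine ⟨w.adj_getVert_succ hi, ?_⟩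
    have h1 : i < w.edges.length := by simpa using hi
    have := ha i h1
    have h2 : w.edges.get ⟨i, h1⟩ = s(w.getVert i, w.getVert (i + 1)) := by
      simp [SimpleGraph.Walk.edges, SimpleGraph.Walk.darts_getElem_eq_getVert]
    rw [h2, SimpleGraph.Subgraph.mem_edgeSet, Nat.odd_iff] at this
    exact this

theorem AP_to_walk {G : SimpleGraph V} {M : G.Subgraph} {n : ℕ} {p : ℕ → V}
    (h : AP G M n p) : ∃ w : G.Walk (p 0) (p n), w.IsPath ∧ IsAlt G M w ∧ w.length = n ∧
      ∀ i, i ≤ n → w.getVert i = p i := by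
  have key : ∀ k, k ≤ n → ∃ w : G.Walk (p 0) (p k), w.length = k ∧
      ∀ i, i ≤ k → w.getVert i = p i := by
    intro k
    induction k with
    | zero => intro _; exact ⟨.nil, rfl, by intro i hi; obtain rfl : i = 0 := by omega
                                            simp⟩
    | succ k ih =>
      intro hk
      obtain ⟨w, h1, h2⟩ := ih (by omega)
      refine ⟨w.concat (h.edge k (by omega)).1, by simp [h1], ?_⟩
      intro i hi
      rcases Nat.lt_or_ge i (k + 1) with h3 | h3
      · rw [SimpleGraph.Walk.concat_eq_append, SimpleGraph.Walk.getVert_append]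
        split_ifs with h4
        · exact h2 i (by omega)
        · have : i = k := by omega
          subst this
          simp [h1]
      · obtain rfl : i = k + 1 := by omega
        rw [SimpleGraph.Walk.getVert_of_length_le]
        simp [h1]
  obtain ⟨w, h1, h2⟩ := key n le_rfl
  refine ⟨w, ?_, ?_, h1, h2⟩
  · rw [← SimpleGraph.Walk.IsPath.getVert_injOn_iff]
    intro i hi j hj e
    have hi' : i ≤ n := by simpa [h1] using hi
    have hj' : j ≤ n := by simpa [h1] using hj
    rw [h2 i hi', h2 j hj'] at e
    exact h.inj i j hi' hj' e
  · intro i hi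
    have hi' : i < n := by simpa [h1] using hi
    have e : w.edges.get ⟨i, hi⟩ = s(w.getVert i, w.getVert (i + 1)) := by
      simp [SimpleGraph.Walk.edges, SimpleGraph.Walk.darts_getElem_eq_getVert]
    rw [e, SimpleGraph.Subgraph.mem_edgeSet, Nat.odd_iff, h2 i (by omega), h2 (i+1) (by omega)]
    exact (h.edge i hi').2

theorem Lev.even_eq {G : SimpleGraph V} {M : G.Subgraph} {n : ℕ} {p : ℕ → V} {v : V}
    (h : Lev G M n p v) (hn : n % 2 = 0) : evenlevel G M v = n := by
  apply le_antisymm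
  · obtain ⟨w, h1, h2, h3, h4⟩ := AP_to_walk h.ap
    have e := h.fin
    subst e
    exact sInf_le ⟨p 0, w, h.ap.h0, h1, h2, by rw [h3]; exact Nat.even_iff.2 hn, by rw [h3]⟩
  · apply le_sInf
    rintro _ ⟨f, w, hf, h1, h2, h3, rfl⟩
    have := h.min _ _ (walk_to_AP w hf h1 h2) (by simp) (by rw [Nat.even_iff] at h3; omega)
    exact_mod_cast this

theorem Lev.odd_eq {G : SimpleGraph V} {M : G.Subgraph} {n : ℕ} {p : ℕ → V} {v : V}
    (h : Lev G M n p v) (hn : n % 2 = 1) : oddlevel G M v = n := by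
  apply le_antisymm
  · obtain ⟨w, h1, h2, h3, h4⟩ := AP_to_walk h.ap
    have e := h.fin
    subst e
    exact sInf_le ⟨p 0, w, h.ap.h0, h1, h2, by rw [h3]; exact Nat.odd_iff.2 hn, by rw [h3]⟩
  · apply le_sInf
    rintro _ ⟨f, w, hf, h1, h2, h3, rfl⟩
    have := h.min _ _ (walk_to_AP w hf h1 h2) (by simp) (by rw [Nat.odd_iff] at h3; omega)
    exact_mod_cast this

theorem exists_even_lev {G : SimpleGraph V} {M : G.Subgraph} {v : V}
    (h : evenlevel G M v ≠ ⊤) : ∃ n p, Lev G M n p v ∧ n % 2 = 0 := by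
  have hne : {n : ℕ∞ | ∃ (f : V) (w : G.Walk f v),
    f ∉ M.verts ∧ w.IsPath ∧ IsAlt G M w ∧ Even w.length ∧ n = (w.length : ℕ∞)}.Nonempty := by
    by_contra hc
    rw [Set.not_nonempty_iff_eq_empty] at hc
    apply h
    rw [evenlevel, hc, sInf_empty]
  obtain ⟨_, f, w, hf, h1, h2, h3, -⟩ := hne
  obtain ⟨k, q, hq, -, hk⟩ := (walk_to_AP w hf h1 h2).exists_lev
  rw [SimpleGraph.Walk.getVert_length] at hq
  exact ⟨k, q, hq, by rw [Nat.even_iff] at h3; omega⟩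

theorem exists_odd_lev {G : SimpleGraph V} {M : G.Subgraph} {v : V}
    (h : oddlevel G M v ≠ ⊤) : ∃ n p, Lev G M n p v ∧ n % 2 = 1 := by
  have hne : {n : ℕ∞ | ∃ (f : V) (w : G.Walk f v),
    f ∉ M.verts ∧ w.IsPath ∧ IsAlt G M w ∧ Odd w.length ∧ n = (w.length : ℕ∞)}.Nonempty := by
    by_contra hc
    rw [Set.not_nonempty_iff_eq_empty] at hc
    apply h
    rw [oddlevel, hc, sInf_empty]
  obtain ⟨_, f, w, hf, h1, h2, h3, -⟩ := hne
  obtain ⟨k, q, hq, -, hk⟩ := (walk_to_AP w hf h1 h2).exists_lev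
  rw [SimpleGraph.Walk.getVert_length] at hq
  exact ⟨k, q, hq, by rw [Nat.odd_iff] at h3; omega⟩

theorem ten_eq {G : SimpleGraph V} {M : G.Subgraph} {n m : ℕ} {p q : ℕ → V} {v : V}
    (h : Lev G M n p v) (h' : Lev G M m q v) (hpar : (n + m) % 2 = 1) :
    tenacity G M v = ((n + m : ℕ) : ℕ∞) := by
  rcases Nat.mod_two_eq_zero_or_one n with h1 | h1
  · rw [tenacity, h.even_eq h1, h'.odd_eq (by omega)]; push_cast; rfl
  · rw [tenacity, h'.even_eq (by omega), h.odd_eq (by omega)]; push_cast; rw [add_comm]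

theorem ten_le {G : SimpleGraph V} {M : G.Subgraph} {n m : ℕ} {p q : ℕ → V} {v : V}
    (h : AP G M n p) (hv : p n = v) (h' : AP G M m q) (hv' : q m = v)
    (hpar : (n + m) % 2 = 1) : tenacity G M v ≤ ((n + m : ℕ) : ℕ∞) := by
  obtain ⟨k, a, h1, h2, h3⟩ := h.exists_lev
  obtain ⟨l, b, h4, h5, h6⟩ := h'.exists_lev
  rw [hv] at h1
  rw [hv'] at h4
  rw [ten_eq h1 h4 (by omega)]
  exact_mod_cast (by omega : k + l ≤ n + m)

theorem exists_levs {G : SimpleGraph V} {M : G.Subgraph} {v : V} {t : ℕ}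
    (h : tenacity G M v ≤ t) : ∃ m p n r, Lev G M m p v ∧ Lev G M n r v ∧ m % 2 = 0 ∧
      n % 2 = 1 ∧ tenacity G M v = ((m + n : ℕ) : ℕ∞) := by
  have hf : tenacity G M v ≠ ⊤ := ne_top_of_le_ne_top (ENat.natCast_ne_top t) h
  rw [tenacity] at hf
  have h1 : evenlevel G M v ≠ ⊤ := fun e => hf (by rw [e]; simp)
  have h2 : oddlevel G M v ≠ ⊤ := fun e => hf (by rw [e]; simp)
  obtain ⟨m, p, hp, hm⟩ := exists_even_lev h1
  obtain ⟨n, r, hr, hn⟩ := exists_odd_lev h2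
  exact ⟨m, p, n, r, hp, hr, hm, hn, ten_eq hp hr (by omega)⟩

/-- the level path of other parity -/
theorem exists_other {G : SimpleGraph V} {M : G.Subgraph} {v : V} {t m : ℕ} {p : ℕ → V}
    (h : tenacity G M v = t) (hp : Lev G M m p v) :
    ∃ n r, Lev G M n r v ∧ (m + n) % 2 = 1 ∧ m + n = t := by
  obtain ⟨m', p', n', r', h1, h2, h3, h4, h5⟩ := exists_levs h.le
  rw [h] at h5
  have h5' : t = m' + n' := by exact_mod_cast h5
  rcases Nat.mod_two_eq_zero_or_one m with h6 | h6
  · have := h1.len_eq hp (by omega)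
    exact ⟨n', r', h2, by omega, by omega⟩
  · have := h2.len_eq hp (by omega)
    exact ⟨m', p', h1, by omega, by omega⟩

theorem honest {G : SimpleGraph V} {M : G.Subgraph} {v : V} {t m i : ℕ} {p : ℕ → V}
    (h : tenacity G M v = t) (hp : Lev G M m p v) (hi : i ≤ m)
    (hu : (t : ℕ∞) ≤ tenacity G M (p i)) : Lev G M i p (p i) := by
  obtain ⟨k, q, hq, hk1, hk2⟩ := (hp.ap.trunc hi).exists_lev
  suffices hh : ¬ k < i by
    have : k = i := by omega
    subst this
    exact ⟨hp.ap.trunc hi, rfl, hq.min⟩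
  intro hlt
  obtain ⟨n, r, hr, hpar, hsum⟩ := exists_other h hp
  have key : ∀ s b, AP G M b s → s b ∈ p '' {j | i ≤ j ∧ j ≤ m} → b < i → b ≤ n → False := by
    rintro s b hs ⟨c0, ⟨hc1, hc2⟩, hc3⟩ hbi hbn
    obtain ⟨a, c, ha, hc, hcm, hac, hd⟩ := first_hit (lo := i) hc1 hc2 hc3.symm
    rcases Nat.mod_two_eq_zero_or_one (a + c) with h1 | h1
    · obtain ⟨w, hw1, hw2⟩ := hs.fwd hp.ap ha hcm hac (by omega)
        (fun x y hx hy hy2 => hd x y hx (by omega) hy2)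
      have := hp.min _ _ hw1 (hw2.trans hp.fin) (by omega)
      omega
    · obtain ⟨w, hw1, hw2, -, -⟩ := hs.back hp.ap ha hcm hc hac h1
        (fun x y hx hy hy2 => hd x y hx hy (by omega))
      have h2 := ten_le hq.ap hq.fin hw1 hw2 (by omega)
      have h3 : t ≤ k + (a + (c - i)) := by exact_mod_cast hu.trans h2
      omega
  rcases Nat.lt_or_ge n i with h1 | h1
  · exact key r n hr.ap ⟨m, ⟨hi, le_rfl⟩, by rw [hp.fin, hr.fin]⟩ h1 le_rfl
  · exact key q k hq.ap ⟨i, ⟨le_rfl, hi⟩, by rw [hq.fin]⟩ hlt (by omega)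

theorem mate_unique {G : SimpleGraph V} {M : G.Subgraph} (hM : M.IsMatching) {u a b : V}
    (h1 : M.Adj u a) (h2 : M.Adj u b) : a = b :=
  (hM (M.edge_vert h1)).unique h1 h2

theorem AP.mate_prev {G : SimpleGraph V} {M : G.Subgraph} (hM : M.IsMatching) {u u' : V}
    (hu : M.Adj u u') {n : ℕ} {p : ℕ → V} (h : AP G M n p) (hn : p n = u) (h2 : n % 2 = 0) :
    1 ≤ n ∧ p (n - 1) = u' := by
  have h1 : 1 ≤ n := by
    by_contra hc
    obtain rfl : n = 0 := by omega
    exact h.h0 (hn ▸ M.edge_vert hu)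
  refine ⟨h1, ?_⟩
  have := (h.edge (n - 1) (by omega)).symm
  rw [show n - 1 + 1 = n by omega, hn] at this
  exact mate_unique hM (this.2.2 (by omega)) hu

theorem AP.mate_next {G : SimpleGraph V} {M : G.Subgraph} (hM : M.IsMatching) {u u' : V}
    (hu : M.Adj u u') {n : ℕ} {p : ℕ → V} (h : AP G M n p) (hn : p n = u') (h2 : n % 2 = 1) :
    ∃ w, AP G M (n + 1) w ∧ w (n + 1) = u := by
  have hnot : ∀ j, j ≤ n → p j ≠ u := by
    intro j hj e
    have hne : j ≠ n := by
      rintro rfl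
      exact hu.ne (e.symm.trans hn)
    rcases Nat.mod_two_eq_zero_or_one j with h3 | h3
    · obtain ⟨h4, h5⟩ := (h.trunc hj).mate_prev hM hu e h3
      have := h.inj _ _ (by omega) le_rfl (h5.trans hn.symm)
      omega
    · have h4 := (h.edge j (by omega)).2.2 h3
      rw [e] at h4
      have := h.inj _ _ (by omega) le_rfl ((mate_unique hM h4 hu).trans hn.symm)
      omega
  obtain ⟨w, h3, -, h4⟩ := h.cat (a := n) (l := 1) (q := fun j => if j = 0 then u' else u) le_rfl
    (by simp [hn])
    (by
      intro i j hi hj e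
      have : u' ≠ u := hu.ne.symm
      by_cases h5 : i = 0 <;> by_cases h6 : j = 0 <;> simp [h5, h6, this, this.symm] at e <;> omega)
    (by
      intro j hj
      obtain rfl : j = 0 := by omega
      simp only [if_true, Nat.zero_add, one_ne_zero, if_false]
      exact ⟨(M.adj_sub hu).symm, by simp [h2, hu.symm]⟩)
    (by
      intro i j hi hj
      by_cases h6 : j = 0
      · simp only [h6, if_true]
        rw [← hn]
        intro e
        have := h.inj _ _ (by omega) le_rfl e
        omega
      · simp only [h6, if_false]
        exact hnot i (by omega))
  exact ⟨w, h3, by rw [h4 1 le_rfl]; simp⟩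

theorem ten_mate_le {G : SimpleGraph V} {M : G.Subgraph} (hM : M.IsMatching) {u u' : V}
    (hu : M.Adj u u') : tenacity G M u ≤ tenacity G M u' := by
  by_cases ht : tenacity G M u' = ⊤
  · rw [ht]; exact le_top
  · obtain ⟨t, ht'⟩ := ENat.ne_top_iff_exists.1 ht
    obtain ⟨m, p, n, r, hp, hr, hm, hn, hs⟩ := exists_levs ht'.symm.le
    obtain ⟨w, hw1, hw2⟩ := hr.ap.mate_next hM hu hr.fin hn
    obtain ⟨h1, h2⟩ := hp.ap.mate_prev hM hu.symm hp.fin hm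
    have := ten_le hw1 hw2 (hp.ap.trunc (Nat.sub_le m 1)) h2 (by omega)
    rw [hs, show m + n = n + 1 + (m - 1) by omega]
    exact this

theorem ten_mate {G : SimpleGraph V} {M : G.Subgraph} (hM : M.IsMatching) {u u' : V}
    (hu : M.Adj u u') : tenacity G M u = tenacity G M u' :=
  le_antisymm (ten_mate_le hM hu) (ten_mate_le hM hu.symm)

/-- function version of `IsBase` -/
def Bs (G : SimpleGraph V) (M : G.Subgraph) (v b : V) : Prop :=
  ∀ m p, Lev G M m p v → ∃ β, β ≤ m ∧ p β = b ∧ tenacity G M v < tenacity G M b ∧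
    ∀ j, β < j → j ≤ m → tenacity G M (p j) ≤ tenacity G M v

inductive Root (G : SimpleGraph V) (M : G.Subgraph) (t : ℕ) (z : V) : V → Prop
  | base : (t : ℕ∞) ≤ tenacity G M z → Root G M t z z
  | step (u b : V) : tenacity G M u < t → Bs G M u b → Root G M t z b → Root G M t z u

def Good (G : SimpleGraph V) (M : G.Subgraph) (s : ℕ) : Prop :=
  ∀ v, tenacity G M v = s → ∃ b, Bs G M v b ∧
    ∀ m p, Lev G M m p v → ∀ β j, β ≤ m → p β = b → β < j → j ≤ m → Root G M (s + 1) b (p j)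

theorem Root.le_ten {G : SimpleGraph V} {M : G.Subgraph} {t : ℕ} {z u : V}
    (h : Root G M t z u) : (t : ℕ∞) ≤ tenacity G M z := by
  induction h with
  | base h => exact h
  | step _ _ _ _ _ ih => exact ih

theorem Root.lt_ten {G : SimpleGraph V} {M : G.Subgraph} {t : ℕ} {z u : V}
    (h : Root G M t z u) (hne : u ≠ z) : tenacity G M u < t := by
  cases h with
  | base h => exact absurd rfl hne
  | step _ _ h => exact h

theorem Root.trans {G : SimpleGraph V} {M : G.Subgraph} {s t : ℕ} {z b c : V} (hst : s ≤ t)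
    (h : Root G M s b c) (h' : Root G M t z b) : Root G M t z c := by
  induction h with
  | base h => exact h'
  | step u b' h1 h2 _ ih =>
    exact Root.step u b' (lt_of_lt_of_le h1 (by exact_mod_cast hst)) h2 ih

theorem far_unique {G : SimpleGraph V} {M : G.Subgraph} {τ : ℕ∞} {m β β' : ℕ} {p : ℕ → V}
    (h1 : β ≤ m) (h2 : τ < tenacity G M (p β))
    (h3 : ∀ j, β < j → j ≤ m → tenacity G M (p j) ≤ τ)
    (h1' : β' ≤ m) (h2' : τ < tenacity G M (p β'))
    (h3' : ∀ j, β' < j → j ≤ m → tenacity G M (p j) ≤ τ) : β = β' := by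
  rcases lt_trichotomy β β' with h | h | h
  · exact absurd h2' (not_lt.2 (h3 _ h h1'))
  · exact h
  · exact absurd h2 (not_lt.2 (h3' _ h h1))

theorem root_path {G : SimpleGraph V} {M : G.Subgraph} (hM : M.IsMatching) {t : ℕ}
    (hG : ∀ s, s < t → Good G M s) {z u : V} (hr : Root G M t z u) :
    u ≠ z → ∀ k e, Lev G M k e u → ∃ ζ, ζ < k ∧ ζ % 2 = 0 ∧ e ζ = z ∧ Lev G M ζ e z ∧
      ∀ j, ζ ≤ j → j ≤ k → Root G M t z (e j) := by
  induction hr with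
  | base h => intro h; exact absurd rfl h
  | step u b h1 h2 h3 ih =>
    intro _ k e he
    obtain ⟨s, hs⟩ := ENat.ne_top_iff_exists.1 (ne_top_of_lt h1)
    have hst : s < t := by rw [← hs] at h1; exact_mod_cast h1
    obtain ⟨β, hβ1, hβ2, hβ3, hβ4⟩ := h2 k e he
    obtain ⟨b', hb1, hb2⟩ := hG s hst u hs.symm
    obtain ⟨β', hβ1', hβ2', hβ3', hβ4'⟩ := hb1 k e he
    have hbb : β = β' := far_unique hβ1 (by rw [hβ2]; exact hβ3) hβ4 hβ1'
      (by rw [hβ2']; exact hβ3') hβ4'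
    subst hbb
    obtain rfl : b = b' := hβ2.symm.trans hβ2'
    have hβk : β < k := by
      rcases Nat.lt_or_ge β k with h | h
      · exact h
      · obtain rfl : β = k := by omega
        rw [he.fin] at hβ2
        rw [hβ2] at hβ3
        exact absurd hβ3 (lt_irrefl _)
    have hβe : β % 2 = 0 := by
      by_contra hc
      have := (he.ap.edge β hβk).2.2 (by omega)
      have h5 := ten_mate hM this
      rw [hβ2] at h5
      have h6 := hβ4 (β + 1) (by omega) (by omega)
      rw [← h5] at h6
      exact absurd hβ3 (not_lt.2 h6)
    have hon : Lev G M β e (e β) := honest hs.symm he hβ1 (by rw [hβ2, hs]; exact hβ3.le)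
    have hroot : ∀ j, β ≤ j → j ≤ k → Root G M t z (e j) := by
      intro j hj1 hj2
      rcases Nat.eq_or_lt_of_le hj1 with h | h
      · subst h; rw [hβ2]; exact h3
      · exact (hb2 k e he β j hβ1 hβ2 h hj2).trans hst h3
    rw [hβ2] at hon
    by_cases hbz : b = z
    · subst hbz
      exact ⟨β, hβk, hβe, hβ2, hon, hroot⟩
    · obtain ⟨ζ, g1, g2, g3, g4, g5⟩ := ih hbz β e hon
      refine ⟨ζ, by omega, g2, g3, g4, ?_⟩
      intro j hj1 hj2
      rcases Nat.lt_or_ge j β with h | h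
      · exact g5 j hj1 h.le
      · exact hroot j h hj2

theorem root_level {G : SimpleGraph V} {M : G.Subgraph} (hM : M.IsMatching) {t : ℕ}
    (hG : ∀ s, s < t → Good G M s) {z x : V} (hr : Root G M t z x) (hne : x ≠ z)
    {k : ℕ} {e : ℕ → V} (he : AP G M k e) (hx : e k = x) :
    ∃ ζ q, Lev G M ζ q z ∧ ζ % 2 = 0 ∧ ζ < k := by
  obtain ⟨l, q, hq, hl, -⟩ := he.exists_lev
  rw [hx] at hq
  obtain ⟨ζ, g1, g2, g3, g4, g5⟩ := root_path hM hG hr hne l q hq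
  exact ⟨ζ, q, g4, g2, by omega⟩

theorem root_path_full {G : SimpleGraph V} {M : G.Subgraph} (hM : M.IsMatching) {t : ℕ}
    (hG : ∀ s, s < t → Good G M s) {z u : V} (hr : Root G M t z u) {k : ℕ} {e : ℕ → V}
    (he : Lev G M k e u) (hor : u ≠ z ∨ k % 2 = 0) :
    ∃ ζ, ζ ≤ k ∧ ζ % 2 = 0 ∧ e ζ = z ∧ Lev G M ζ e z ∧
      ∀ j, j ≤ k → (Root G M t z (e j) ↔ ζ ≤ j) := by
  have h1 : ∃ ζ, ζ ≤ k ∧ ζ % 2 = 0 ∧ e ζ = z ∧ Lev G M ζ e z ∧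
      ∀ j, ζ ≤ j → j ≤ k → Root G M t z (e j) := by
    by_cases hz : u = z
    · subst hz
      refine ⟨k, le_rfl, by tauto, he.fin, he, ?_⟩
      intro j hj1 hj2
      obtain rfl : j = k := by omega
      rw [he.fin]; exact hr
    · obtain ⟨ζ, g1, g2⟩ := root_path hM hG hr hz k e he
      exact ⟨ζ, g1.le, g2⟩
  obtain ⟨ζ, g1, g2, g3, g4, g5⟩ := h1
  refine ⟨ζ, g1, g2, g3, g4, fun j hj => ⟨fun hrj => ?_, fun hj2 => g5 j hj2 hj⟩⟩
  by_contra hc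
  have hne : e j ≠ z := by
    rw [← g3]
    intro e1
    have := he.ap.inj _ _ hj g1 e1
    omega
  obtain ⟨ζ', q, k1, k2, k3⟩ := root_level hM hG hrj hne (he.ap.trunc hj) rfl
  have := k1.len_eq g4 (by omega)
  omega

theorem root_mate {G : SimpleGraph V} {M : G.Subgraph} (hM : M.IsMatching) {t : ℕ}
    (hG : ∀ s, s < t → Good G M s) {z u u' : V} (hr : Root G M t z u) (hne : u ≠ z)
    (hu : M.Adj u u') : Root G M t z u' := by
  obtain ⟨m, p, n, r, hp, -, hm, -, -⟩ := exists_levs (hr.lt_ten hne).le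
  obtain ⟨ζ, g1, g2, g3, g4, g5⟩ := root_path hM hG hr hne m p hp
  obtain ⟨h1, h2⟩ := hp.ap.mate_prev hM hu hp.fin hm
  rw [← h2]
  exact g5 _ (by omega) (by omega)

theorem root_exists {G : SimpleGraph V} {M : G.Subgraph} {t : ℕ}
    (hG : ∀ s, s < t → Good G M s) : ∀ n x p, Lev G M n p x → ∃ z, Root G M t z x := by
  intro n
  induction n using Nat.strong_induction_on with
  | _ n ih =>
    intro x p hp
    rcases le_or_gt (t : ℕ∞) (tenacity G M x) with h1 | h1
    · exact ⟨x, Root.base h1⟩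
    · obtain ⟨s, hs⟩ := ENat.ne_top_iff_exists.1 (ne_top_of_lt h1)
      have hst : s < t := by rw [← hs] at h1; exact_mod_cast h1
      obtain ⟨b, hb, -⟩ := hG s hst x hs.symm
      obtain ⟨β, hβ1, hβ2, hβ3, hβ4⟩ := hb n p hp
      have hβk : β < n := by
        rcases Nat.lt_or_ge β n with h | h
        · exact h
        · obtain rfl : β = n := by omega
          rw [hp.fin] at hβ2
          rw [hβ2] at hβ3
          exact absurd hβ3 (lt_irrefl _)
      have hon : Lev G M β p (p β) := honest hs.symm hp hβ1 (by rw [hβ2, hs]; exact hβ3.le)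
      rw [hβ2] at hon
      obtain ⟨z, hz⟩ := ih β hβk b p hon
      exact ⟨z, Root.step x b h1 hb hz⟩

theorem close_path {G : SimpleGraph V} {M : G.Subgraph} {t : ℕ} {z : V} {m i b a c k ζ : ℕ}
    {p s e : ℕ → V} (hp : AP G M m p) (hs : AP G M b s) (he : AP G M k e) (hek : e k = p i)
    (hζ : Lev G M ζ e z) (hζk : ζ ≤ k) (hζ2 : ζ % 2 = 0) (hk2 : k % 2 = 0) (hi2 : i % 2 = 0)
    (hroot : ∀ j, ζ ≤ j → j ≤ k → Root G M t z (e j))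
    (hlast : ∀ j, i < j → j ≤ m → ¬ Root G M t z (p j))
    (ha : a ≤ b) (hic : i < c) (hcm : c ≤ m) (hac : s a = p c) (hpar : (a + c) % 2 = 1)
    (hd : ∀ x y, x < a → i ≤ y → y ≤ m → s x ≠ p y)
    (hnr : ∀ x, x ≤ a → ¬ Root G M t z (s x)) : t ≤ a + (c - i) + k := by
  obtain ⟨w, w1, w2, w3, w4⟩ := hs.back hp ha hcm hic.le hac hpar
    (fun x y hx hy hy2 => hd x y hx hy (by omega))
  obtain ⟨w', g1, g2, -, -⟩ := w1.back (d := ζ) he le_rfl le_rfl hζk (w2.trans hek.symm) (by omega)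
    (by
      intro x y hx hy1 hy2 e1
      have hry := hroot y hy1 hy2
      rw [← e1] at hry
      rcases Nat.lt_or_ge a x with h | h
      · have := w4 (x - a) (by omega)
        rw [show a + (x - a) = x by omega] at this
        rw [this] at hry
        exact hlast _ (by omega) (by omega) hry
      · rw [w3 x h] at hry
        exact hnr x h hry)
  have h1 := ten_le hζ.ap hζ.fin g1 (g2.trans hζ.fin) (by omega)
  have h2 : (t : ℕ∞) ≤ tenacity G M z := (hroot ζ le_rfl hζk).le_ten
  have h3 : t ≤ ζ + (a + (c - i) + (k - ζ)) := by exact_mod_cast h2.trans h1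
  omega

theorem root_ne {G : SimpleGraph V} {M : G.Subgraph} {t : ℕ} {z v : V}
    (h : tenacity G M v = t) (hz : z ≠ v) : ¬ Root G M t z v := fun hr => by
  have := hr.lt_ten hz.symm
  rw [h] at this
  exact lt_irrefl _ this

theorem L1 {G : SimpleGraph V} {M : G.Subgraph} (hM : M.IsMatching) {t : ℕ}
    (hG : ∀ s, s < t → Good G M s) {z v : V} {m n i : ℕ} {p : ℕ → V}
    (hp : Lev G M m p v) (hsum : m + n = t)
    (him : i ≤ m) (hi : Root G M t z (p i)) (hlast : ∀ j, i < j → j ≤ m → ¬ Root G M t z (p j))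
    (hi2 : i % 2 = 0) (hiz : p i ≠ z) (hdis : ¬ Lev G M i p (p i)) :
    ∃ k e ζ, Lev G M k e (p i) ∧ k < i ∧ k % 2 = 0 ∧ ζ < k ∧ ζ % 2 = 0 ∧ e ζ = z ∧
      Lev G M ζ e z ∧ (∀ j, j ≤ k → (Root G M t z (e j) ↔ ζ ≤ j)) ∧ n < ζ := by
  obtain ⟨k, e, he, hk1, hk2⟩ := (hp.ap.trunc him).exists_lev
  have hki : k < i := by
    rcases Nat.lt_or_ge k i with h | h
    · exact h
    · obtain rfl : k = i := by omega
      exact absurd ⟨hp.ap.trunc him, rfl, he.min⟩ hdis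
  obtain ⟨ζ, g1, g2, g3, g4, g5⟩ := root_path_full hM hG hi he (Or.inl hiz)
  have hζk : ζ < k := by
    rcases Nat.eq_or_lt_of_le g1 with h | h
    · subst h; exact absurd (he.fin.symm.trans g3) hiz
    · exact h
  refine ⟨k, e, ζ, he, hki, by omega, hζk, g2, g3, g4, g5, ?_⟩
  obtain ⟨a, c, ha, hc, hcm, hac, hd⟩ := first_hit (lo := i) le_rfl him he.fin
  rcases Nat.mod_two_eq_zero_or_one (a + c) with h1 | h1
  · obtain ⟨w, hw1, hw2⟩ := he.ap.fwd hp.ap ha hcm hac (by omega)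
      (fun x y hx hy hy2 => hd x y hx (by omega) hy2)
    have := hp.min _ _ hw1 (hw2.trans hp.fin) (by omega)
    omega
  · have hic : i < c := by
      rcases Nat.eq_or_lt_of_le hc with h | h
      · subst h
        have := he.ap.inj _ _ ha le_rfl (hac.trans he.fin.symm)
        omega
      · exact h
    have haζ : a < ζ := by
      by_contra hcon
      have := (g5 a ha).2 (by omega)
      rw [hac] at this
      exact hlast c hic hcm this
    have := close_path hp.ap he.ap he.ap he.fin g4 g1 g2 (by omega) hi2
      (fun j h1 h2 => (g5 j h2).2 h1) hlast ha hic hcm hac h1 hd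
      (fun x hx hrx => by have := (g5 x (by omega)).1 hrx; omega)
    omega

theorem exists_last {P : ℕ → Prop} {m j : ℕ} (hj : j ≤ m) (h : P j) :
    ∃ i, j ≤ i ∧ i ≤ m ∧ P i ∧ ∀ l, i < l → l ≤ m → ¬ P l := by
  induction m with
  | zero => 
    exact ⟨j, le_rfl, hj, h, fun l h1 h2 => by omega⟩
  | succ m ih =>
    by_cases hP : P (m + 1)
    · exact ⟨m + 1, hj, le_rfl, hP, fun l h1 h2 => by omega⟩
    · have hne : j ≠ m + 1 := by rintro rfl; exact hP h
      obtain ⟨i, h1, h2, h3, h4⟩ := ih (by omega)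
      refine ⟨i, h1, by omega, h3, fun l h5 h6 => ?_⟩
      by_cases hl : l = m + 1
      · subst hl; exact hP
      · exact h4 l h5 (by omega)

theorem last_even {G : SimpleGraph V} {M : G.Subgraph} (hM : M.IsMatching) {t : ℕ}
    (hG : ∀ s, s < t → Good G M s) {z v : V} (hv : tenacity G M v = t) (hzv : z ≠ v)
    {m i : ℕ} {p : ℕ → V} (hp : Lev G M m p v)
    (him : i ≤ m) (hi : Root G M t z (p i)) (hlast : ∀ j, i < j → j ≤ m → ¬ Root G M t z (p j))
    (hiz : p i ≠ z) : i % 2 = 0 := by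
  by_contra hc
  have hlt : i < m := by
    rcases Nat.eq_or_lt_of_le him with h | h
    · subst h; rw [hp.fin] at hi; exact absurd hi (root_ne hv hzv)
    · exact h
  exact hlast (i + 1) (by omega) (by omega)
    (root_mate hM hG hi hiz ((hp.ap.edge i hlt).2.2 (by omega)))

theorem L2 {G : SimpleGraph V} {M : G.Subgraph} (hM : M.IsMatching) {t : ℕ}
    (hG : ∀ s, s < t → Good G M s) {z v : V} (hv : tenacity G M v = t) (hzv : z ≠ v)
    {m i : ℕ} {p : ℕ → V} (hp : Lev G M m p v)
    (him : i ≤ m) (hi : Root G M t z (p i)) (hlast : ∀ j, i < j → j ≤ m → ¬ Root G M t z (p j)) :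
    Lev G M i p (p i) := by
  by_cases hiz : p i = z
  · exact honest hv hp him (by rw [hiz]; exact hi.le_ten)
  have hi2 := last_even hM hG hv hzv hp him hi hlast hiz
  by_contra hdis
  obtain ⟨n, r, hr, hpar, hsum⟩ := exists_other hv hp
  obtain ⟨k, e, ζ, he, hki, hk2, hζk, g2, g3, g4, g5, hnζ⟩ :=
    L1 hM hG hp hsum him hi hlast hi2 hiz hdis
  have hten : (t : ℕ∞) ≤ tenacity G M z := hi.le_ten
  -- r does not meet the class of z
  have hno : ∀ x, x ≤ n → ¬ Root G M t z (r x) := by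
    intro x hx hrx
    obtain ⟨l, -, hl2, hl3, hl4⟩ := exists_last (P := fun x => Root G M t z (r x)) hx hrx
    by_cases hlz : r l = z
    · have h1 : Lev G M l r (r l) := honest hv hr hl2 (by rw [hlz]; exact hten)
      rw [hlz] at h1
      rcases Nat.mod_two_eq_zero_or_one l with h2 | h2
      · have := h1.len_eq g4 (by omega)
        omega
      · have h3 := ten_le h1.ap h1.fin g4.ap g4.fin (by omega)
        have h4 : t ≤ l + ζ := by exact_mod_cast hten.trans h3
        omega
    · have hl0 := last_even hM hG hv hzv hr hl2 hl3 hl4 hlz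
      by_cases hdis' : Lev G M l r (r l)
      · obtain ⟨ζ', f1, f2, f3, f4, f5⟩ := root_path_full hM hG hl3 hdis' (Or.inl hlz)
        have := f4.len_eq g4 (by omega)
        omega
      · obtain ⟨k', e', ζ', he', hki', hk2', hζk', g2', g3', g4', g5', hnζ'⟩ :=
          L1 hM hG hr ((Nat.add_comm n m).trans hsum) hl2 hl3 hl4 hl0 hlz hdis'
        have := g4'.len_eq g4 (by omega)
        omega
  obtain ⟨a, c, ha, hc, hcm, hac, hd⟩ := first_hit (lo := i) him le_rfl (hr.fin.trans hp.fin.symm)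
  rcases Nat.mod_two_eq_zero_or_one (a + c) with h1 | h1
  · obtain ⟨w, hw1, hw2⟩ := hr.ap.fwd hp.ap ha hcm hac (by omega)
      (fun x y hx hy hy2 => hd x y hx (by omega) hy2)
    have := hp.min _ _ hw1 (hw2.trans hp.fin) (by omega)
    omega
  · have hic : i < c := by
      rcases Nat.eq_or_lt_of_le hc with h | h
      · subst h
        rw [← hac] at hi
        exact absurd hi (hno a ha)
      · exact h
    have := close_path hp.ap hr.ap he.ap he.fin g4 hζk.le g2 (by omega) hi2
      (fun j h1 h2 => (g5 j h2).2 h1) hlast ha hic hcm hac h1 hd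
      (fun x hx hrx => hno x (by omega) hrx)
    omega

/-- combined structure: a level path through the class of `z` -/
theorem L3 {G : SimpleGraph V} {M : G.Subgraph} (hM : M.IsMatching) {t : ℕ}
    (hG : ∀ s, s < t → Good G M s) {z v : V} (hv : tenacity G M v = t) (hzv : z ≠ v)
    {m c : ℕ} {p : ℕ → V} (hp : Lev G M m p v) (hcm : c ≤ m) (hc : Root G M t z (p c)) :
    (∃ ζ, ζ ≤ c ∧ ζ % 2 = 0 ∧ p ζ = z ∧ Lev G M ζ p z ∧
      ∀ j, ζ ≤ j → j ≤ c → Root G M t z (p j)) ∨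
    (∃ l, c ≤ l ∧ l < m ∧ l % 2 = 1 ∧ p l = z ∧ Lev G M l p z) := by
  obtain ⟨i, h1, h2, h3, h4⟩ := exists_last (P := fun x => Root G M t z (p x)) hcm hc
  have hlev := L2 hM hG hv hzv hp h2 h3 h4
  have hlt : i < m := by
    rcases Nat.eq_or_lt_of_le h2 with h | h
    · subst h; rw [hp.fin] at h3; exact absurd h3 (root_ne hv hzv)
    · exact h
  by_cases hor : p i ≠ z ∨ i % 2 = 0
  · left
    obtain ⟨ζ, f1, f2, f3, f4, f5⟩ := root_path_full hM hG h3 hlev hor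
    refine ⟨ζ, (f5 c h1).1 hc, f2, f3, f4, fun j hj1 hj2 => (f5 j (by omega)).2 hj1⟩
  · right
    push Not at hor
    refine ⟨i, h1, hlt, by omega, hor.1, ?_⟩
    rw [hor.1] at hlev
    exact hlev

/-- `β` is the index of the furthest high vertex -/
def Far (G : SimpleGraph V) (M : G.Subgraph) (t m : ℕ) (p : ℕ → V) (β : ℕ) : Prop :=
  β ≤ m ∧ (t : ℕ∞) < tenacity G M (p β) ∧ ∀ j, β < j → j ≤ m → tenacity G M (p j) ≤ t

theorem Bs.far {G : SimpleGraph V} {M : G.Subgraph} {t m β i : ℕ} {p : ℕ → V} {x b : V}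
    (hb : Bs G M x b) (hx : tenacity G M x = t) (hfar : Far G M t m p β) (hβ : β < i)
    (him : i ≤ m) (hp : Lev G M i p x) : p β = b := by
  obtain ⟨β', h1, h2, h3, h4⟩ := hb i p hp
  rw [hx] at h3 h4
  have : β = β' := far_unique (m := i) hβ.le hfar.2.1
    (fun j h5 h6 => hfar.2.2 j h5 (by omega)) h1 (by rw [h2]; exact h3) h4
  rw [this, h2]

theorem base_mem {G : SimpleGraph V} {M : G.Subgraph} (hM : M.IsMatching) {t : ℕ}
    (hG : ∀ s, s < t → Good G M s) {v : V} (hv : tenacity G M v = t)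
    {m n β : ℕ} {p r : ℕ → V} (hp : Lev G M m p v) (hr : Lev G M n r v)
    (hpar : (m + n) % 2 = 1)
    (ih : ∀ x c q, tenacity G M x = t → Lev G M c q x → c < m → c < n → ∃ b, Bs G M x b)
    (hfar : Far G M t m p β) : ∃ γ, γ ≤ n ∧ r γ = p β := by
  have hsum : m + n = t := by
    have := ten_eq hp hr hpar
    rw [hv] at this
    exact_mod_cast this.symm
  by_contra hno
  push Not at hno
  obtain ⟨hβm, hβt, hβl⟩ := hfar
  have hβm' : β < m := by
    rcases Nat.eq_or_lt_of_le hβm with h | h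
    · subst h; rw [hp.fin, hv] at hβt; exact absurd hβt (lt_irrefl _)
    · exact h
  obtain ⟨a, c, ha, hc, hcm, hac, hd⟩ := first_hit (lo := β + 1) hβm' le_rfl
    (hr.fin.trans hp.fin.symm)
  rcases Nat.mod_two_eq_zero_or_one (a + c) with h1 | h1
  swap
  · obtain ⟨w, hw1, hw2, -, -⟩ := hr.ap.back (d := β) hp.ap ha hcm (by omega) hac h1
      (by
        intro x y hx hy1 hy2
        rcases Nat.eq_or_lt_of_le hy1 with h | h
        · subst h; exact hno x (by omega)
        · exact hd x y hx h (by omega))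
    have h2 := ten_le (hp.ap.trunc hβm) rfl hw1 hw2 (by omega)
    have h3 : t < β + (a + (c - β)) := by exact_mod_cast hβt.trans_le h2
    omega
  have hcm' : c < m := by
    rcases Nat.eq_or_lt_of_le hcm with h | h
    · subst h
      have := hr.ap.inj _ _ ha le_rfl (hac.trans (hp.fin.trans hr.fin.symm))
      omega
    · exact h
  have han : a < n := by
    rcases Nat.eq_or_lt_of_le ha with h | h
    · subst h
      have := hp.ap.inj _ _ hcm le_rfl (hac.symm.trans (hr.fin.trans hp.fin.symm))
      omega
    · exact h
  have hxt : tenacity G M (p c) ≤ t := hβl c hc hcm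
  -- a common honest vertex of tenacity t after b gives a contradiction
  have common : ∀ i l, β < i → i < m → l < n → p i = r l → tenacity G M (p i) = t →
      i % 2 = l % 2 → False := by
    intro i l hi him hln hil hten hpar2
    have h2 := honest hv hp him.le hten.ge
    have h3 := honest hv hr hln.le (by rw [← hil]; exact hten.ge)
    rw [← hil] at h3
    have h4 := h2.len_eq h3 hpar2
    obtain ⟨b, hb⟩ := ih _ i p hten h2 him (by omega)
    have h5 := hb.far hten ⟨hβm, hβt, hβl⟩ hi him.le h2
    obtain ⟨γ, h6, h7, -⟩ := hb l r h3
    exact hno γ (by omega) (h7.trans h5.symm)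
  rcases lt_or_eq_of_le hxt with hlt | heq
  swap
  · exact common c a hc hcm' han hac.symm heq (by omega)
  obtain ⟨k, q, hq, -, -⟩ := (hp.ap.trunc hcm).exists_lev
  obtain ⟨z, hz⟩ := root_exists hG k _ q hq
  have hten : (t : ℕ∞) ≤ tenacity G M z := hz.le_ten
  have hxz : p c ≠ z := by
    rintro rfl
    exact absurd hlt (not_lt.2 hten)
  have hz' : Root G M t z (r a) := by rw [hac]; exact hz
  by_cases hzv : z = v
  · subst hzv
    rcases Nat.mod_two_eq_zero_or_one m with h2 | h2
    · obtain ⟨ζ, q', g1, g2, g3⟩ := root_level hM hG hz hxz (hp.ap.trunc hcm) rfl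
      have := g1.len_eq hp (by omega)
      omega
    · obtain ⟨ζ, q', g1, g2, g3⟩ := root_level hM hG hz hxz (hr.ap.trunc ha) hac
      have := g1.len_eq hr (by omega)
      omega
  rcases L3 hM hG hv hzv hp hcm hz with ⟨ζ, f1, f2, f3, f4, f5⟩ | ⟨i, f1, f2, f3, f4, f5⟩
  · have hζβ : β < ζ ∨ ζ = β := by
      by_contra hcon
      have h3 := f5 β (by omega) (by omega)
      have h4 : p β ≠ z := by
        rw [← f3]
        intro e
        have := hp.ap.inj _ _ hβm (by omega) e
        omega
      exact absurd (h3.lt_ten h4) (not_lt.2 hβt.le)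
    rcases L3 hM hG hv hzv hr ha hz' with ⟨ζ', k1, k2, k3, k4, k5⟩ | ⟨l, k1, k2, k3, k4, k5⟩
    · rcases hζβ with h | h
      · have h6 : ζ' ≠ a := by
          rintro rfl
          exact hxz (hac.symm.trans k3)
        exact hd ζ' ζ (by omega) h (by omega) (k3.trans f3.symm)
      · subst h
        exact hno ζ' (by omega) (k3.trans f3.symm)
    · have h6 := ten_le f4.ap f4.fin k5.ap k5.fin (by omega)
      have h7 : t ≤ ζ + l := by exact_mod_cast hten.trans h6
      omega
  · rcases L3 hM hG hv hzv hr ha hz' with ⟨ζ', k1, k2, k3, k4, k5⟩ | ⟨l, k1, k2, k3, k4, k5⟩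
    · have h6 := ten_le f5.ap f5.fin k4.ap k4.fin (by omega)
      have h7 : t ≤ i + ζ' := by exact_mod_cast hten.trans h6
      omega
    · refine common i l (by omega) f2 k2 (f4.trans k4.symm) ?_ (by omega)
      apply le_antisymm (hβl i (by omega) f2.le)
      rw [f4]; exact hten

theorem base_eq {G : SimpleGraph V} {M : G.Subgraph} (hM : M.IsMatching) {t : ℕ}
    (hG : ∀ s, s < t → Good G M s) {v : V} (hv : tenacity G M v = t)
    {m n β γ : ℕ} {p r : ℕ → V} (hp : Lev G M m p v) (hr : Lev G M n r v)
    (hpar : (m + n) % 2 = 1)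
    (ih : ∀ x c q, tenacity G M x = t → Lev G M c q x → c < m → c < n → ∃ b, Bs G M x b)
    (hfar : Far G M t m p β) (hfar' : Far G M t n r γ) : r γ = p β := by
  have hsum : m + n = t := by
    have := ten_eq hp hr hpar
    rw [hv] at this
    exact_mod_cast this.symm
  have key : ∀ i j, i ≤ m → j ≤ n → r j = p i → (t : ℕ∞) < tenacity G M (p i) → i = j := by
    intro i j hi hj hij ht
    have h1 := honest hv hp hi ht.le
    have h2 := honest hv hr hj (by rw [hij]; exact ht.le)
    rw [hij] at h2
    rcases Nat.mod_two_eq_zero_or_one (i + j) with h3 | h3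
    · exact h1.len_eq h2 (by omega)
    · have h4 := ten_le h1.ap h1.fin h2.ap h2.fin h3
      have h5 : t < i + j := by exact_mod_cast ht.trans_le h4
      omega
  obtain ⟨γ', h1, h2⟩ := base_mem hM hG hv hp hr hpar ih hfar
  obtain ⟨β', h3, h4⟩ := base_mem hM hG hv hr hp (by omega)
    (fun x c q a1 a2 a3 a4 => ih x c q a1 a2 a4 a3) hfar'
  have h5 := key β γ' hfar.1 h1 h2 hfar.2.1
  have h6 := key β' γ h3 hfar'.1 h4.symm (by rw [h4]; exact hfar'.2.1)
  have h7 : β' ≤ β := by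
    by_contra hc
    have := hfar.2.2 β' (by omega) h3
    rw [h4] at this
    exact absurd hfar'.2.1 (not_lt.2 this)
  have h8 : γ' ≤ γ := by
    by_contra hc
    have := hfar'.2.2 γ' (by omega) h1
    rw [h2] at this
    exact absurd hfar.2.1 (not_lt.2 this)
  have : β' = β := by omega
  rw [← h4, this]

theorem lm_le {G : SimpleGraph V} {M : G.Subgraph} {g : V} (hg : g ∉ M.verts) :
    lm G M ≤ tenacity G M g := by
  refine le_trans ?_ (le_add_self : oddlevel G M g ≤ evenlevel G M g + oddlevel G M g)
  apply le_sInf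
  rintro _ ⟨f, w, hf, h1, h2, h3, rfl⟩
  refine sInf_le ⟨f, g, w, hf, hg, ?_, h1, h2, h3, rfl⟩
  rintro rfl
  rw [SimpleGraph.Walk.isPath_iff_eq_nil] at h1
  subst h1
  simp at h3

theorem exists_far {G : SimpleGraph V} {M : G.Subgraph} {t m : ℕ} {p : ℕ → V}
    (hlm : (t : ℕ∞) < lm G M) (hp : AP G M m p) : ∃ β, Far G M t m p β := by
  obtain ⟨i, -, h2, h3, h4⟩ := exists_last (P := fun j => (t : ℕ∞) < tenacity G M (p j))
    (Nat.zero_le m) (hlm.trans_le (lm_le hp.h0))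
  exact ⟨i, h2, h3, fun j h5 h6 => not_lt.1 (h4 j h5 h6)⟩

theorem base_exists {G : SimpleGraph V} {M : G.Subgraph} (hM : M.IsMatching) {t : ℕ}
    (hG : ∀ s, s < t → Good G M s) (hlm : (t : ℕ∞) < lm G M) :
    ∀ K v m n p r, tenacity G M v = t → Lev G M m p v → Lev G M n r v → m % 2 = 0 → n % 2 = 1 →
      (m ≤ K ∨ n ≤ K) → ∃ b, Bs G M v b := by
  intro K
  induction K using Nat.strong_induction_on with
  | _ K IH =>
    intro v m n p r hv hp hr hm hn hK
    have ih : ∀ x c q, tenacity G M x = t → Lev G M c q x → c < m → c < n →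
        ∃ b, Bs G M x b := by
      intro x c q hx hq h1 h2
      obtain ⟨c', q', hq', h3, h4⟩ := exists_other hx hq
      rcases Nat.mod_two_eq_zero_or_one c with h5 | h5
      · exact IH c (by omega) x c c' q q' hx hq hq' h5 (by omega) (Or.inl le_rfl)
      · exact IH c (by omega) x c' c q' q hx hq' hq (by omega) h5 (Or.inr le_rfl)
    obtain ⟨β, hβ⟩ := exists_far hlm hp.ap
    obtain ⟨γ, hγ⟩ := exists_far hlm hr.ap
    have e0 := base_eq hM hG hv hp hr (by omega) ih hβ hγ
    refine ⟨p β, ?_⟩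
    intro k q hq
    obtain ⟨δ, hδ⟩ := exists_far hlm hq.ap
    have e1 : q δ = p β := by
      rcases Nat.mod_two_eq_zero_or_one k with h5 | h5
      · have := hq.len_eq hp (by omega)
        subst this
        exact (base_eq hM hG hv hq hr (by omega) ih hδ hγ).symm.trans e0
      · have := hq.len_eq hr (by omega)
        subst this
        exact base_eq hM hG hv hp hq (by omega) ih hβ hδ
    refine ⟨δ, hδ.1, e1, ?_, ?_⟩
    · rw [hv]; exact hβ.2.1
    · rw [hv]; exact hδ.2.2

theorem good_all {G : SimpleGraph V} {M : G.Subgraph} (hM : M.IsMatching) :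
    ∀ t : ℕ, (t : ℕ∞) < lm G M → Good G M t := by
  intro t
  induction t using Nat.strong_induction_on with
  | _ t IH =>
    intro hlm
    have hG : ∀ s, s < t → Good G M s := fun s hs =>
      IH s hs (lt_trans (by exact_mod_cast hs) hlm)
    have hbase : ∀ v, tenacity G M v = t → ∃ b, Bs G M v b := by
      intro v hv
      obtain ⟨m, p, n, r, hp, hr, hm, hn, -⟩ := exists_levs hv.le
      exact base_exists hM hG hlm m v m n p r hv hp hr hm hn (Or.inl le_rfl)
    intro v hv
    obtain ⟨b, hb⟩ := hbase v hv
    refine ⟨b, hb, ?_⟩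
    intro m p hp β c hβm hβ hβc hcm
    obtain ⟨β', h1, h2, h3, h4⟩ := hb m p hp
    obtain rfl : β' = β := hp.ap.inj _ _ h1 hβm (h2.trans hβ.symm)
    rw [hv] at h3 h4
    have hfar : Far G M t m p β' := ⟨h1, by rw [h2]; exact h3, h4⟩
    have hbb : Root G M (t + 1) b b := Root.base (by
      push_cast
      exact Order.add_one_le_of_lt h3)
    -- vertices of tenacity t
    have heq : ∀ i, β' < i → i ≤ m → tenacity G M (p i) = t → Root G M (t + 1) b (p i) := by
      intro i hi him hten
      obtain ⟨b', hb'⟩ := hbase _ hten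
      have := hb'.far hten hfar hi him (honest hv hp him hten.ge)
      have hbb' : b' = b := this.symm.trans h2
      subst hbb'
      exact Root.step _ b' (by rw [hten]; exact_mod_cast Nat.lt_succ_self t) hb' hbb
    rcases lt_or_eq_of_le (h4 c hβc hcm) with hlt | he
    swap
    · exact heq c hβc hcm he
    obtain ⟨k, q, hq, -, -⟩ := (hp.ap.trunc hcm).exists_lev
    obtain ⟨z, hz⟩ := root_exists hG k _ q hq
    have hten : (t : ℕ∞) ≤ tenacity G M z := hz.le_ten
    suffices hs : Root G M (t + 1) b z from hz.trans (Nat.le_succ t) hs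
    have hzi : ∀ i, β' < i → i ≤ m → p i = z → Root G M (t + 1) b z := by
      intro i hi him hiz
      rw [← hiz]
      refine heq i hi him (le_antisymm (h4 i hi him) ?_)
      rw [hiz]; exact hten
    by_cases hzv : z = v
    · exact hzi m (by omega) le_rfl (hp.fin.trans hzv.symm)
    rcases L3 hM hG hv hzv hp hcm hz with ⟨ζ, f1, f2, f3, f4, f5⟩ | ⟨i, f1, f2, f3, f4, f5⟩
    · rcases lt_trichotomy β' ζ with h | h | h
      · exact hzi ζ h (by omega) f3
      · subst h
        rw [← f3, h2]; exact hbb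
      · exfalso
        have h5 := f5 β' h.le (by omega)
        have h6 : p β' ≠ z := by
          rw [← f3]
          intro e
          have := hp.ap.inj _ _ hβm (by omega) e
          omega
        have h7 := h5.lt_ten h6
        rw [h2] at h7
        exact absurd h7 (not_lt.2 h3.le)
    · exact hzi i (by omega) f2.le f4

theorem exists_base {G : SimpleGraph V} {M : G.Subgraph} (hM : M.IsMatching) {v : V}
    (hlt : tenacity G M v < lm G M) : ∃! b : V, IsBase G M v b := by
  obtain ⟨t, ht⟩ := ENat.ne_top_iff_exists.1 (ne_top_of_lt hlt)
  obtain ⟨b, hb, -⟩ := good_all hM t (by rw [ht]; exact hlt) v ht.symm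
  obtain ⟨m, p, -, -, hp, -, hm, -, -⟩ := exists_levs ht.symm.le
  refine ⟨b, ?_, ?_⟩
  · rintro f w ⟨hf, h1, h2, h3⟩
    have hap := walk_to_AP w hf h1 h2
    have hlev : Lev G M w.length w.getVert v := by
      refine ⟨hap, by simp, ?_⟩
      intro k q hq hqv hk
      obtain ⟨l, q', hl, hlk, hl2⟩ := hq.exists_lev
      rw [hqv] at hl
      rcases h3 with ⟨h3, h4⟩ | ⟨h3, h4⟩
      · rw [Nat.even_iff] at h3
        rw [hl.even_eq (by omega)] at h4
        have : w.length = l := by exact_mod_cast h4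
        omega
      · rw [Nat.odd_iff] at h3
        rw [hl.odd_eq (by omega)] at h4
        have : w.length = l := by exact_mod_cast h4
        omega
    obtain ⟨β, g1, g2, g3, g4⟩ := hb _ _ hlev
    have hbs : b ∈ w.support := by rw [← g2]; exact w.getVert_mem_support β
    have hidx : ∀ u (hu : u ∈ w.support), (w.takeUntil u hu).length ≤ w.length ∧
        w.getVert (w.takeUntil u hu).length = u := fun u hu =>
      ⟨w.length_takeUntil_le_length hu, SimpleGraph.Walk.getVert_length_takeUntil hu⟩
    refine ⟨hbs, g3, ?_⟩
    intro u hu htu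
    obtain ⟨k1, k2⟩ := hidx b hbs
    obtain ⟨k3, k4⟩ := hidx u hu
    have hβ := hap.inj _ _ k1 g1 (k2.trans g2.symm)
    rw [hβ]
    by_contra hc
    have := g4 _ (not_le.1 hc) k3
    rw [k4] at this
    exact absurd htu (not_lt.2 this)
  · intro b' hb'
    obtain ⟨w, h1, h2, h3, h4⟩ := AP_to_walk hp.ap
    obtain ⟨β, g1, g2, g3, g4⟩ := hb _ _ hp
    have hfin := hp.fin
    subst hfin
    obtain ⟨k1, k2, k3⟩ := hb' _ w ⟨hp.ap.h0, h1, h2, Or.inl ⟨by rw [h3]; exact Nat.even_iff.2 hm,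
      by rw [h3, hp.even_eq hm]⟩⟩
    have l1 := w.length_takeUntil_le_length k1
    have l2 := SimpleGraph.Walk.getVert_length_takeUntil k1
    have hbs : b ∈ w.support := by rw [← g2, ← h4 β g1]; exact w.getVert_mem_support β
    have l3 := w.length_takeUntil_le_length hbs
    have l4 := SimpleGraph.Walk.getVert_length_takeUntil hbs
    have l5 := k3 b hbs g3
    rw [h3] at l1 l3
    rw [h4 _ l1] at l2
    rw [h4 _ l3] at l4
    have hβ := hp.ap.inj _ _ l3 g1 (l4.trans g2.symm)
    rcases Nat.eq_or_lt_of_le l5 with h | h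
    · rw [← h, l4] at l2
      exact l2.symm
    · have := g4 _ (by omega) l1
      rw [l2] at this
      exact absurd k2 (not_lt.2 this)

/-- The base theorem: a vertex of tenacity `t < l_m` has a unique base, i.e. there is a
unique vertex `b` which, on every `evenlevel(v)` and `oddlevel(v)` path, is the furthest
vertex of tenacity `> t` from the starting unmatched vertex. -/
theorem stmt3 (G : SimpleGraph V) (M : G.Subgraph) (hM : M.IsMatching)
    (v : V) (t : ℕ∞) (ht : tenacity G M v = t) (hlt : t < lm G M) :
    ∃! b : V, IsBase G M v b := by
  subst ht
  exact exists_base hM hlt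

end MV
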